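/- arXiv:2504.00919 — 3 statements merged into one kernel-verified Lean document; each statement's English description precedes it below -/
import Mathlib

section
/- Let α > 0. Under the same hypotheses as in the previous density-level inequality — q : ℝ × ℝ → [0, ∞) measurable with ∫ q(z, y) dz = 1 for all y and q(z, y) ≤ e^α q(z, y') for all z, y, y'; p : ℝ × ℝ → (0, ∞) measurable with ∫∫ p = 1; ṗ : ℝ × ℝ → ℝ measurable with ṗ(x, ·) integrable for a.e. x, ∫∫ ṗ²/p < ∞ and ∫ ṗ_X²/p_X < ∞ where p_X(x) := ∫ p(x, y) dy, ṗ_X(x) := ∫ ṗ(x, y) dy — define g(x, z) := ∫ q(z, y) p(x, y) dy and ġ(x, z) := ∫ q(z, y) ṗ(x, y) dy. Then ∫∫ ġ(x, z)²/g(x, z) dz dx ≤ (1 + (9/4)(e^α − 1)²) · ( ∫∫ ṗ(x,y)²/p(x,y) dx dy + ∫ ṗ_X(x)²/p_X(x) dx ), where integrands of the form a²/b are interpreted as 0 whenever b = 0. (This is the density-level form of inequality (term3) of the paper's Fisher-information lemma, with balanced coefficients tending to 1 as α → 0.) -/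
open MeasureTheory Real

/-!
Passing to the privatized pair is the data processing inequality for Fisher information. By
Cauchy–Schwarz with weight `q(z, ·)`,
`(∫ q(z, y) ṗ(x, y) dy)² / ∫ q(z, y) p(x, y) dy ≤ ∫ q(z, y) ṗ(x, y)² / p(x, y) dy`,
and since `∫ q(z, y) dz = 1`, integrating over `z` leaves `∫ ṗ(x, y)² / p(x, y) dy`. So the
information of `(X, Z)` is at most that of `(X, Y)`, and the claimed bound only adds nonnegative
terms.
-/

open scoped ENNReal

section Integral

variable {Ω : Type*} [MeasurableSpace Ω] {μ : Measure Ω}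

lemma sq_lintegral_le_lintegral_mul_lintegral_of_sq_le_mul {f g r : Ω → ℝ≥0∞}
    (hf : AEMeasurable f μ) (hg : AEMeasurable g μ) (hr : ∀ᵐ ω ∂μ, r ω ^ 2 ≤ f ω * g ω) :
    (∫⁻ ω, r ω ∂μ) ^ 2 ≤ (∫⁻ ω, f ω ∂μ) * ∫⁻ ω, g ω ∂μ := by
  have rpow_half_sq (a : ℝ≥0∞) : (a ^ (1 / 2 : ℝ)) ^ 2 = a := by
    rw [← ENNReal.rpow_mul_natCast]
    norm_num
  have hr_le : ∀ᵐ ω ∂μ, r ω ≤ f ω ^ (1 / 2 : ℝ) * g ω ^ (1 / 2 : ℝ) := by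
    filter_upwards [hr] with ω hω
    rwa [← ENNReal.pow_le_pow_left_iff two_ne_zero, mul_pow, rpow_half_sq, rpow_half_sq]
  calc (∫⁻ ω, r ω ∂μ) ^ 2
      ≤ (∫⁻ ω, f ω ^ (1 / 2 : ℝ) * g ω ^ (1 / 2 : ℝ) ∂μ) ^ 2 := by
        gcongr 1
        exact lintegral_mono_ae hr_le
    _ ≤ ((∫⁻ ω, f ω ∂μ) ^ (1 / 2 : ℝ) * (∫⁻ ω, g ω ∂μ) ^ (1 / 2 : ℝ)) ^ 2 := by
        gcongr 1
        exact ENNReal.lintegral_mul_norm_pow_le hf hg (by norm_num) (by norm_num) (by norm_num)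
    _ = (∫⁻ ω, f ω ∂μ) * ∫⁻ ω, g ω ∂μ := by
        rw [mul_pow, rpow_half_sq, rpow_half_sq]

lemma ofReal_sq_integral_div_integral_le_lintegral_of_sq_le_mul {f g r : Ω → ℝ}
    (hf : AEMeasurable f μ) (hg : 0 ≤ᵐ[μ] g) (hr : ∀ᵐ ω ∂μ, r ω ^ 2 ≤ f ω * g ω) :
    ENNReal.ofReal ((∫ ω, r ω ∂μ) ^ 2 / ∫ ω, g ω ∂μ) ≤ ∫⁻ ω, ENNReal.ofReal (f ω) ∂μ := by
  rcases (integral_nonneg_of_ae hg).eq_or_lt' with hzero | hpos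
  · simp [hzero]
  have hg_int : Integrable g μ := .of_integral_ne_zero hpos.ne'
  rw [ENNReal.ofReal_div_of_pos hpos]
  refine ENNReal.div_le_of_le_mul ?_
  calc ENNReal.ofReal ((∫ ω, r ω ∂μ) ^ 2)
      = ‖∫ ω, r ω ∂μ‖ₑ ^ 2 := by
        rw [← enorm_pow, Real.enorm_of_nonneg (sq_nonneg _)]
    _ ≤ (∫⁻ ω, ‖r ω‖ₑ ∂μ) ^ 2 := by
        gcongr 1
        exact enorm_integral_le_lintegral_enorm r
    _ ≤ (∫⁻ ω, ENNReal.ofReal (f ω) ∂μ) * ∫⁻ ω, ENNReal.ofReal (g ω) ∂μ := by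
        refine sq_lintegral_le_lintegral_mul_lintegral_of_sq_le_mul hf.ennreal_ofReal
          hg_int.aemeasurable.ennreal_ofReal ?_
        filter_upwards [hg, hr] with ω hgω hrω
        rw [← enorm_pow, Real.enorm_of_nonneg (sq_nonneg _), ← ENNReal.ofReal_mul' hgω]
        exact ENNReal.ofReal_le_ofReal hrω
    _ = (∫⁻ ω, ENNReal.ofReal (f ω) ∂μ) * ENNReal.ofReal (∫ ω, g ω ∂μ) := by
        rw [ofReal_integral_eq_lintegral_ofReal hg_int hg]

lemma lintegral_ofReal_le_ofReal_mul_integral_add {f : Ω → ℝ}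
    (hf : Integrable f μ) (hf_nonneg : 0 ≤ᵐ[μ] f) {b c : ℝ} (hb : 0 ≤ b) (hc : 1 ≤ c) :
    ∫⁻ ω, ENNReal.ofReal (f ω) ∂μ ≤ ENNReal.ofReal (c * ((∫ ω, f ω ∂μ) + b)) := by
  rw [← ofReal_integral_eq_lintegral_ofReal hf hf_nonneg]
  have hint : 0 ≤ ∫ ω, f ω ∂μ := integral_nonneg_of_ae hf_nonneg
  exact ENNReal.ofReal_le_ofReal ((le_add_of_nonneg_right hb).trans
    (le_mul_of_one_le_left (add_nonneg hint hb) hc))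

end Integral

section DataProcessing

variable {X Y Z : Type*} [MeasurableSpace X] [MeasurableSpace Y] [MeasurableSpace Z]

/-- The Fisher information `∫ ṗ² / p dμ ∈ [0, ∞]` of a statistical model at a parameter value where
its density with respect to `μ` is `p` and the derivative of the density in the parameter is `pd`.
Points with `p = 0` contribute `0`. -/
noncomputable def fisherInfo (μ : Measure X) (p pd : X → ℝ) : ℝ≥0∞ :=
  ∫⁻ x, ENNReal.ofReal (pd x ^ 2 / p x) ∂μ

/-- `q z y` is a conditional density at `z`, with respect to `ρ`, of the output of a randomized
mechanism given its input `y`. -/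
structure IsConditionalDensity (ρ : Measure Z) (q : Z → Y → ℝ) : Prop where
  measurable : Measurable (Function.uncurry q)
  nonneg : ∀ z y, 0 ≤ q z y
  integral_eq_one : ∀ y, ∫ z, q z y ∂ρ = 1

variable {μ : Measure X} {ν : Measure Y} {ρ : Measure Z} {q : Z → Y → ℝ}

lemma IsConditionalDensity.lintegral_eq_one (hq : IsConditionalDensity ρ q) (y : Y) :
    ∫⁻ z, ENNReal.ofReal (q z y) ∂ρ = 1 := by
  have hint : Integrable (fun z => q z y) ρ :=
    integrable_of_integral_eq_one (hq.integral_eq_one y)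
  rw [← ofReal_integral_eq_lintegral_ofReal hint (ae_of_all _ fun z => hq.nonneg z y),
    hq.integral_eq_one y, ENNReal.ofReal_one]

lemma IsConditionalDensity.lintegral_lintegral_mul [SFinite ν] [SFinite ρ]
    (hq : IsConditionalDensity ρ q) {f : Y → ℝ≥0∞} (hf : AEMeasurable f ν) :
    ∫⁻ z, ∫⁻ y, ENNReal.ofReal (q z y) * f y ∂ν ∂ρ = ∫⁻ y, f y ∂ν := by
  have hmeas : AEMeasurable (Function.uncurry fun z y => ENNReal.ofReal (q z y) * f y)
      (ρ.prod ν) :=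
    hq.measurable.ennreal_ofReal.aemeasurable.mul hf.comp_snd
  rw [lintegral_lintegral_swap hmeas]
  refine lintegral_congr fun y => ?_
  have hqy : Measurable fun z => q z y := hq.measurable.of_uncurry_right
  rw [lintegral_mul_const _ hqy.ennreal_ofReal, hq.lintegral_eq_one, one_mul]

lemma IsConditionalDensity.fisherInfo_integral_mul_le [SFinite ν] [SFinite ρ]
    (hq : IsConditionalDensity ρ q) {u v : Y → ℝ} (hu : AEMeasurable u ν) (hv : AEMeasurable v ν)
    (hu_nonneg : 0 ≤ᵐ[ν] u) (hv_zero : ∀ᵐ y ∂ν, u y = 0 → v y = 0) :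
    fisherInfo ρ (fun z => ∫ y, q z y * u y ∂ν) (fun z => ∫ y, q z y * v y ∂ν) ≤
      fisherInfo ν u v := by
  have hratio : AEMeasurable (fun y => v y ^ 2 / u y) ν := (hv.pow_const 2).div hu
  have cauchy_schwarz (z : Z) :
      ENNReal.ofReal ((∫ y, q z y * v y ∂ν) ^ 2 / ∫ y, q z y * u y ∂ν) ≤
        ∫⁻ y, ENNReal.ofReal (q z y * (v y ^ 2 / u y)) ∂ν := by
    refine ofReal_sq_integral_div_integral_le_lintegral_of_sq_le_mul
      (hq.measurable.of_uncurry_left.aemeasurable.mul hratio)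
      (hu_nonneg.mono fun y hy => mul_nonneg (hq.nonneg z y) hy) (hv_zero.mono fun y hy => ?_)
    have cancel : v y ^ 2 / u y * u y = v y ^ 2 :=
      div_mul_cancel_of_imp fun h => by simp [hy h]
    exact le_of_eq (by linear_combination -(q z y ^ 2) * cancel)
  calc fisherInfo ρ (fun z => ∫ y, q z y * u y ∂ν) (fun z => ∫ y, q z y * v y ∂ν)
      ≤ ∫⁻ z, ∫⁻ y, ENNReal.ofReal (q z y * (v y ^ 2 / u y)) ∂ν ∂ρ := lintegral_mono cauchy_schwarz
    _ = ∫⁻ z, ∫⁻ y, ENNReal.ofReal (q z y) * ENNReal.ofReal (v y ^ 2 / u y) ∂ν ∂ρ := by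
        simp_rw [ENNReal.ofReal_mul (hq.nonneg _ _)]
    _ = fisherInfo ν u v := hq.lintegral_lintegral_mul hratio.ennreal_ofReal

theorem fisher_information_term3_general [SFinite ν] [SFinite ρ] (hq : IsConditionalDensity ρ q)
    {p pd : X × Y → ℝ} (hp : Integrable p (μ.prod ν)) (hpd : AEMeasurable pd (μ.prod ν))
    (hp_nonneg : 0 ≤ᵐ[μ.prod ν] p) (hpd_zero : ∀ᵐ w ∂μ.prod ν, p w = 0 → pd w = 0) :
    ∫⁻ x, fisherInfo ρ (fun z => ∫ y, q z y * p (x, y) ∂ν) (fun z => ∫ y, q z y * pd (x, y) ∂ν) ∂μ ≤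
      fisherInfo (μ.prod ν) p pd := by
  have hratio : AEMeasurable (fun w => pd w ^ 2 / p w) (μ.prod ν) :=
    (hpd.pow_const 2).div hp.aemeasurable
  calc ∫⁻ x, fisherInfo ρ (fun z => ∫ y, q z y * p (x, y) ∂ν)
        (fun z => ∫ y, q z y * pd (x, y) ∂ν) ∂μ
      ≤ ∫⁻ x, fisherInfo ν (fun y => p (x, y)) (fun y => pd (x, y)) ∂μ := by
        refine lintegral_mono_ae ?_
        filter_upwards [hp.aestronglyMeasurable.prodMk_left, hpd.aestronglyMeasurable.prodMk_left,
          Measure.ae_ae_of_ae_prod hp_nonneg, Measure.ae_ae_of_ae_prod hpd_zero]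
          with x hpx hpdx hpx_nonneg hpdx_zero
        exact hq.fisherInfo_integral_mul_le hpx.aemeasurable hpdx.aemeasurable hpx_nonneg hpdx_zero
    _ = fisherInfo (μ.prod ν) p pd := (lintegral_prod _ hratio.ennreal_ofReal).symm

end DataProcessing

/-- Density-level form of inequality (term3) of the Fisher-information lemma,
with balanced coefficients tending to `1` as `α → 0`. Division by zero is `0` in
Lean, implementing the convention that `a²/b = 0` whenever `b = 0`. -/
theorem fisher_information_term3
    (α : ℝ) (hα : 0 < α)
    (q : ℝ → ℝ → ℝ) (hq_meas : Measurable (Function.uncurry q))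
    (hq_nonneg : ∀ z y, 0 ≤ q z y)
    (hq_int : ∀ y, ∫ z, q z y = 1)
    (hq_ldp : ∀ z y y', q z y ≤ Real.exp α * q z y')
    (p : ℝ × ℝ → ℝ) (hp_meas : Measurable p) (hp_pos : ∀ w, 0 < p w)
    (hp_int : ∫ w : ℝ × ℝ, p w = 1)
    (pd : ℝ × ℝ → ℝ) (hpd_meas : Measurable pd)
    (hpd_int : ∀ᵐ x : ℝ, Integrable fun y => pd (x, y))
    (hFI2 : Integrable fun w : ℝ × ℝ => pd w ^ 2 / p w)
    (hFI1 : Integrable fun x : ℝ => (∫ y, pd (x, y)) ^ 2 / ∫ y, p (x, y)) :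
    (∫⁻ x : ℝ, ∫⁻ z : ℝ,
        ENNReal.ofReal ((∫ y, q z y * pd (x, y)) ^ 2 / ∫ y, q z y * p (x, y))) ≤
      ENNReal.ofReal
        ((1 + (9 / 4) * (Real.exp α - 1) ^ 2) *
          ((∫ w : ℝ × ℝ, pd w ^ 2 / p w) +
            ∫ x : ℝ, (∫ y, pd (x, y)) ^ 2 / ∫ y, p (x, y))) :=
  (fisher_information_term3_general ⟨hq_meas, hq_nonneg, hq_int⟩
    (integrable_of_integral_eq_one hp_int) hpd_meas.aemeasurable
    (ae_of_all _ fun w => (hp_pos w).le) (ae_of_all _ fun w hw => absurd hw (hp_pos w).ne')).trans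
    (lintegral_ofReal_le_ofReal_mul_integral_add hFI2
      (ae_of_all _ fun w => div_nonneg (sq_nonneg _) (hp_pos w).le)
      (integral_nonneg fun x => div_nonneg (sq_nonneg _) (integral_nonneg fun _ => (hp_pos _).le))
      (le_add_of_nonneg_right (by positivity)))
end

section
/- Let b > 0, K ∈ ℕ, and let ξ_0, ξ_1, …, ξ_K be i.i.d. random variables with law Laplace(0, b). Then for every real t with 0 ≤ t ≤ √((K+1)/2): P( | Σ_{k=0}^K ξ_k | ≥ 2√2 · t · √(K+1) · b ) ≤ 2 · exp(−t²). -/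
open MeasureTheory Real

/-- The Laplace distribution with location `m` and scale `b`. -/
noncomputable def laplace (m b : ℝ) : Measure ℝ :=
  volume.withDensity fun z => ENNReal.ofReal ((1 / (2 * b)) * Real.exp (-|z - m| / b))

/-!
The moment generating function of `Laplace(m, b)` at `θ` is `exp (θ m) / (1 - (θ b)²)`, and
`1 / (1 - x) ≤ exp (2 x)` on `[0, 1/2]`. So a centered Laplace variable has the moment generating
function bound of a Gaussian of variance `4 b²` as long as `|θ| ≤ 1 / (√2 b)`. This local bound
adds up over independent variables, and Chernoff's method with the Gaussian optimum `θ = ε / c`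
applies as long as this `θ` lies in the allowed range.
-/

open ProbabilityTheory

/-- A random variable is sub-exponential with variance proxy `c` and cutoff `r` if its moment
generating function is at most that of a centered Gaussian of variance `c` on `[-r, r]`. The
literature often uses the parameters `√c` and `1 / r` instead; with the cutoff itself as the
parameter no division is needed. -/
structure HasSubexponentialMGF {Ω : Type*} [MeasurableSpace Ω] (X : Ω → ℝ) (c r : ℝ)
    (μ : Measure Ω) : Prop where
  integrable_exp_mul : ∀ θ, |θ| ≤ r → Integrable (fun ω => exp (θ * X ω)) μ
  mgf_le : ∀ θ, |θ| ≤ r → mgf X μ θ ≤ exp (c * θ ^ 2 / 2)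

namespace HasSubexponentialMGF

variable {Ω : Type*} [MeasurableSpace Ω] {μ : Measure Ω} {X : Ω → ℝ} {c r ε : ℝ}

theorem neg (h : HasSubexponentialMGF X c r μ) : HasSubexponentialMGF (-X) c r μ where
  integrable_exp_mul θ hθ := by
    simpa using h.integrable_exp_mul (-θ) (by rwa [abs_neg])
  mgf_le θ hθ := by
    simpa [mgf_neg] using h.mgf_le (-θ) (by rwa [abs_neg])

theorem of_hasLaw {ν : Measure ℝ} (h : HasSubexponentialMGF id c r ν) (hX : HasLaw X ν μ) :
    HasSubexponentialMGF X c r μ where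
  integrable_exp_mul θ hθ := by
    have hint := h.integrable_exp_mul θ hθ
    rw [← hX.map_eq] at hint
    exact hint.comp_aemeasurable hX.aemeasurable
  mgf_le θ hθ := by
    rw [← mgf_id_map hX.aemeasurable, hX.map_eq]
    exact h.mgf_le θ hθ

theorem sum_of_iIndepFun {ι : Type*} {X : ι → Ω → ℝ} {c : ι → ℝ} {s : Finset ι}
    (h_indep : iIndepFun X μ) (h_meas : ∀ i, AEMeasurable (X i) μ)
    (h : ∀ i ∈ s, HasSubexponentialMGF (X i) (c i) r μ) :
    HasSubexponentialMGF (∑ i ∈ s, X i) (∑ i ∈ s, c i) r μ where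
  integrable_exp_mul θ hθ := by
    have := h_indep.isProbabilityMeasure
    have hpos : 0 < mgf (∑ i ∈ s, X i) μ θ := by
      rw [h_indep.mgf_sum₀ h_meas]
      exact Finset.prod_pos fun i hi => mgf_pos ((h i hi).integrable_exp_mul θ hθ)
    exact not_imp_comm.1 mgf_undef hpos.ne'
  mgf_le θ hθ := by
    calc mgf (∑ i ∈ s, X i) μ θ = ∏ i ∈ s, mgf (X i) μ θ := h_indep.mgf_sum₀ h_meas s
      _ ≤ ∏ i ∈ s, exp (c i * θ ^ 2 / 2) :=
        Finset.prod_le_prod (fun _ _ => mgf_nonneg) fun i hi => (h i hi).mgf_le θ hθ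
      _ = exp ((∑ i ∈ s, c i) * θ ^ 2 / 2) := by
        rw [← exp_sum, Finset.sum_mul, Finset.sum_div]

variable [IsFiniteMeasure μ]

theorem measureReal_ge_le (h : HasSubexponentialMGF X c r μ) (hc : 0 < c) (hε : 0 ≤ ε)
    (hεr : ε ≤ c * r) : μ.real {ω | ε ≤ X ω} ≤ exp (-ε ^ 2 / (2 * c)) := by
  have hθ : 0 ≤ ε / c := by positivity
  have hθr : |ε / c| ≤ r := by rwa [abs_of_nonneg hθ, div_le_iff₀' hc]
  calc μ.real {ω | ε ≤ X ω} ≤ exp (-(ε / c) * ε) * mgf X μ (ε / c) :=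
        measure_ge_le_exp_mul_mgf ε hθ (h.integrable_exp_mul _ hθr)
    _ ≤ exp (-(ε / c) * ε) * exp (c * (ε / c) ^ 2 / 2) := by
        gcongr
        exact h.mgf_le _ hθr
    _ = exp (-ε ^ 2 / (2 * c)) := by
        rw [← exp_add]
        congr 1
        field_simp
        ring

theorem measureReal_abs_ge_le (h : HasSubexponentialMGF X c r μ) (hc : 0 < c) (hε : 0 ≤ ε)
    (hεr : ε ≤ c * r) : μ.real {ω | ε ≤ |X ω|} ≤ 2 * exp (-ε ^ 2 / (2 * c)) := by
  have hunion : {ω | ε ≤ |X ω|} = {ω | ε ≤ X ω} ∪ {ω | ε ≤ (-X) ω} := by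
    ext ω
    exact le_abs (α := ℝ)
  calc μ.real {ω | ε ≤ |X ω|} ≤ μ.real {ω | ε ≤ X ω} + μ.real {ω | ε ≤ (-X) ω} :=
        hunion ▸ measureReal_union_le _ _
    _ ≤ 2 * exp (-ε ^ 2 / (2 * c)) := by
        rw [two_mul]
        exact add_le_add (h.measureReal_ge_le hc hε hεr) (h.neg.measureReal_ge_le hc hε hεr)

end HasSubexponentialMGF

theorem setLIntegral_exp_mul_Iic {a : ℝ} (ha : 0 < a) (c : ℝ) :
    ∫⁻ z in Set.Iic c, ENNReal.ofReal (exp (a * z)) = ENNReal.ofReal (exp (a * c) / a) := by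
  rw [← ofReal_integral_eq_lintegral_ofReal (integrableOn_exp_mul_Iic ha c)
    (ae_of_all _ fun _ => (exp_pos _).le), integral_exp_mul_Iic ha]

theorem setLIntegral_exp_mul_Ioi {a : ℝ} (ha : a < 0) (c : ℝ) :
    ∫⁻ z in Set.Ioi c, ENNReal.ofReal (exp (a * z)) = ENNReal.ofReal (-exp (a * c) / a) := by
  rw [← ofReal_integral_eq_lintegral_ofReal (integrableOn_exp_mul_Ioi ha c)
    (ae_of_all _ fun _ => (exp_pos _).le), integral_exp_mul_Ioi ha]

theorem one_div_one_sub_le_exp_two_mul {x : ℝ} (hx : 0 ≤ x) (hx' : x ≤ 1 / 2) :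
    1 / (1 - x) ≤ exp (2 * x) := by
  rw [div_le_iff₀ (by linarith)]
  calc 1 ≤ (2 * x + 1) * (1 - x) := by nlinarith
    _ ≤ exp (2 * x) * (1 - x) := by
      gcongr
      · linarith
      · exact add_one_le_exp _

section Laplace

variable {m b θ : ℝ}

theorem setLIntegral_exp_mul_laplace (hb : 0 ≤ b) {s : Set ℝ} (hs : MeasurableSet s) :
    ∫⁻ z in s, ENNReal.ofReal (exp (θ * z)) ∂laplace m b =
      ENNReal.ofReal (1 / (2 * b)) * ∫⁻ z in s, ENNReal.ofReal (exp (θ * z - |z - m| / b)) := by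
  rw [laplace, setLIntegral_withDensity_eq_setLIntegral_mul _ (by fun_prop) (by fun_prop) hs,
    ← lintegral_const_mul _ (by fun_prop)]
  refine lintegral_congr fun z => ?_
  rw [Pi.mul_apply, ENNReal.ofReal_mul (by positivity), mul_assoc,
    ← ENNReal.ofReal_mul (exp_pos _).le, ← exp_add]
  ring_nf

theorem setLIntegral_Iic_exp_mul_laplace (hb : 0 < b) (hθ : -1 < θ * b) :
    ∫⁻ z in Set.Iic m, ENNReal.ofReal (exp (θ * z)) ∂laplace m b =
      ENNReal.ofReal (exp (θ * m) / (2 * (1 + θ * b))) := by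
  have hrate : θ + 1 / b = (1 + θ * b) / b := by field_simp; ring
  have hpos : 0 < 1 + θ * b := by linarith
  have hexp : ∀ z ∈ Set.Iic m, ENNReal.ofReal (exp (θ * z - |z - m| / b)) =
      ENNReal.ofReal (exp (-m / b)) * ENNReal.ofReal (exp ((θ + 1 / b) * z)) := fun z hz => by
    rw [abs_of_nonpos (sub_nonpos.2 hz), ← ENNReal.ofReal_mul (exp_pos _).le, ← exp_add]
    ring_nf
  rw [setLIntegral_exp_mul_laplace hb.le measurableSet_Iic,
    setLIntegral_congr_fun measurableSet_Iic hexp, lintegral_const_mul _ (by fun_prop),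
    setLIntegral_exp_mul_Iic (hrate ▸ div_pos hpos hb), ← ENNReal.ofReal_mul (exp_pos _).le,
    ← ENNReal.ofReal_mul (by positivity), ← mul_div_assoc (exp _), ← exp_add,
    show -m / b + (θ + 1 / b) * m = θ * m by ring, hrate]
  congr 1
  field_simp

theorem setLIntegral_Ioi_exp_mul_laplace (hb : 0 < b) (hθ : θ * b < 1) :
    ∫⁻ z in Set.Ioi m, ENNReal.ofReal (exp (θ * z)) ∂laplace m b =
      ENNReal.ofReal (exp (θ * m) / (2 * (1 - θ * b))) := by
  have hrate : θ - 1 / b = -((1 - θ * b) / b) := by field_simp; ring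
  have hpos : 0 < 1 - θ * b := by linarith
  have hexp : ∀ z ∈ Set.Ioi m, ENNReal.ofReal (exp (θ * z - |z - m| / b)) =
      ENNReal.ofReal (exp (m / b)) * ENNReal.ofReal (exp ((θ - 1 / b) * z)) := fun z hz => by
    rw [abs_of_pos (sub_pos.2 hz), ← ENNReal.ofReal_mul (exp_pos _).le, ← exp_add]
    ring_nf
  rw [setLIntegral_exp_mul_laplace hb.le measurableSet_Ioi,
    setLIntegral_congr_fun measurableSet_Ioi hexp, lintegral_const_mul _ (by fun_prop),
    setLIntegral_exp_mul_Ioi (hrate ▸ neg_lt_zero.2 (div_pos hpos hb)),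
    ← ENNReal.ofReal_mul (exp_pos _).le, ← ENNReal.ofReal_mul (by positivity),
    ← mul_div_assoc (exp _), mul_neg, ← exp_add,
    show m / b + (θ - 1 / b) * m = θ * m by ring, hrate, neg_div_neg_eq]
  congr 1
  field_simp

theorem lintegral_exp_mul_laplace (hb : 0 < b) (hθ : |θ * b| < 1) :
    ∫⁻ z, ENNReal.ofReal (exp (θ * z)) ∂laplace m b =
      ENNReal.ofReal (exp (θ * m) / (1 - (θ * b) ^ 2)) := by
  obtain ⟨hlower, hupper⟩ := abs_lt.1 hθ
  have hadd : 0 < 1 + θ * b := by linarith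
  have hsub : 0 < 1 - θ * b := by linarith
  rw [← lintegral_add_compl _ (measurableSet_Iic (a := m)), Set.compl_Iic,
    setLIntegral_Iic_exp_mul_laplace hb hlower, setLIntegral_Ioi_exp_mul_laplace hb hupper,
    ← ENNReal.ofReal_add (div_pos (exp_pos _) (mul_pos two_pos hadd)).le
      (div_pos (exp_pos _) (mul_pos two_pos hsub)).le,
    show 1 - (θ * b) ^ 2 = (1 + θ * b) * (1 - θ * b) by ring]
  congr 1
  field_simp
  ring

theorem isProbabilityMeasure_laplace (hb : 0 < b) : IsProbabilityMeasure (laplace m b) :=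
  ⟨by simpa using lintegral_exp_mul_laplace (m := m) (θ := 0) hb (by simp)⟩

theorem integrable_exp_mul_laplace (hb : 0 < b) (hθ : |θ * b| < 1) :
    Integrable (fun z => exp (θ * z)) (laplace m b) := by
  rw [← lintegral_ofReal_ne_top_iff_integrable (by fun_prop)
    (ae_of_all _ fun _ => (exp_pos _).le), lintegral_exp_mul_laplace hb hθ]
  exact ENNReal.ofReal_ne_top

theorem mgf_id_laplace (hb : 0 < b) (hθ : |θ * b| < 1) :
    mgf id (laplace m b) θ = exp (θ * m) / (1 - (θ * b) ^ 2) := by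
  have hsq : (θ * b) ^ 2 < 1 := (sq_lt_one_iff_abs_lt_one _).2 hθ
  simp only [mgf, id]
  rw [integral_eq_lintegral_of_nonneg_ae (ae_of_all _ fun _ => (exp_pos _).le) (by fun_prop),
    lintegral_exp_mul_laplace hb hθ,
    ENNReal.toReal_ofReal (div_nonneg (exp_pos _).le (sub_pos.2 hsq).le)]

theorem hasSubexponentialMGF_id_laplace (hb : 0 < b) :
    HasSubexponentialMGF id (4 * b ^ 2) (1 / (√2 * b)) (laplace 0 b) := by
  have hsq {θ : ℝ} (hθ : |θ| ≤ 1 / (√2 * b)) : (θ * b) ^ 2 ≤ 1 / 2 := by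
    calc (θ * b) ^ 2 = |θ| ^ 2 * b ^ 2 := by rw [sq_abs, mul_pow]
      _ ≤ (1 / (√2 * b)) ^ 2 * b ^ 2 := by gcongr
      _ = 1 / 2 := by
        rw [div_pow, mul_pow, sq_sqrt zero_le_two]
        field_simp
  have habs {θ : ℝ} (hθ : |θ| ≤ 1 / (√2 * b)) : |θ * b| < 1 :=
    (sq_lt_one_iff_abs_lt_one _).1 ((hsq hθ).trans_lt one_half_lt_one)
  refine ⟨fun θ hθ => integrable_exp_mul_laplace hb (habs hθ), fun θ hθ => ?_⟩
  calc mgf id (laplace 0 b) θ = 1 / (1 - (θ * b) ^ 2) := by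
        rw [mgf_id_laplace hb (habs hθ), mul_zero, exp_zero]
    _ ≤ exp (2 * (θ * b) ^ 2) := one_div_one_sub_le_exp_two_mul (sq_nonneg _) (hsq hθ)
    _ = exp (4 * b ^ 2 * θ ^ 2 / 2) := by ring_nf

end Laplace

theorem laplace_sum_tail_bound_general {Ω ι : Type*} [MeasurableSpace Ω] {μ : Measure Ω}
    [Fintype ι] [Nonempty ι] {X : ι → Ω → ℝ} {b t : ℝ} (hX : iIndepFun X μ)
    (hlaw : ∀ i, HasLaw (X i) (laplace 0 b) μ) (hb : 0 < b) (ht : 0 ≤ t)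
    (ht' : t ≤ √(Fintype.card ι)) :
    μ {ω | 2 * √2 * t * √(Fintype.card ι) * b ≤ |∑ i, X i ω|} ≤
      ENNReal.ofReal (2 * exp (-t ^ 2)) := by
  have := hX.isProbabilityMeasure
  set n : ℝ := (Fintype.card ι : ℝ)
  have hn : 0 < n := Nat.cast_pos.2 Fintype.card_pos
  have hsum : HasSubexponentialMGF (∑ i, X i) (n * (4 * b ^ 2)) (1 / (√2 * b)) μ := by
    simpa [n] using HasSubexponentialMGF.sum_of_iIndepFun (s := Finset.univ) hX
      (fun i => (hlaw i).aemeasurable) fun i _ =>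
        (hasSubexponentialMGF_id_laplace hb).of_hasLaw (hlaw i)
  have hcutoff : 2 * √2 * t * √n * b ≤ n * (4 * b ^ 2) * (1 / (√2 * b)) := by
    calc 2 * √2 * t * √n * b ≤ 2 * √2 * √n * √n * b := by gcongr
      _ = n * (4 * b ^ 2) * (1 / (√2 * b)) := by
        rw [mul_assoc (2 * √2), mul_self_sqrt hn.le]
        field_simp
        rw [sq_sqrt zero_le_two]
        norm_num
  have hexponent : -(2 * √2 * t * √n * b) ^ 2 / (2 * (n * (4 * b ^ 2))) = -t ^ 2 := by
    simp only [mul_pow, sq_sqrt zero_le_two, sq_sqrt hn.le]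
    field_simp
    ring
  have htail := hsum.measureReal_abs_ge_le (by positivity) (by positivity) hcutoff
  simp only [Finset.sum_apply, hexponent] at htail
  rw [← ofReal_measureReal]
  exact ENNReal.ofReal_le_ofReal htail

/-- Bernstein-type tail bound for a sum of `K+1` i.i.d. centered Laplace
variables with scale `b`: for `0 ≤ t ≤ √((K+1)/2)`,
`P(|Σ ξ_k| ≥ 2√2 t √(K+1) b) ≤ 2 exp(−t²)`. -/
theorem laplace_sum_tail_bound
    (b : ℝ) (hb : 0 < b) (K : ℕ) (t : ℝ) (ht : 0 ≤ t)
    (ht' : t ≤ Real.sqrt (((K : ℝ) + 1) / 2)) :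
    (Measure.pi fun _ : Fin (K + 1) => laplace 0 b)
        {ξ | 2 * Real.sqrt 2 * t * Real.sqrt ((K : ℝ) + 1) * b ≤ |∑ k, ξ k|} ≤
      ENNReal.ofReal (2 * Real.exp (-t ^ 2)) := by
  have := isProbabilityMeasure_laplace (m := 0) hb
  simpa using laplace_sum_tail_bound_general (iIndepFun_pi fun _ => aemeasurable_id)
    (fun k => (measurePreserving_eval (fun _ : Fin (K + 1) => laplace 0 b) k).hasLaw) hb ht
    (ht'.trans (sqrt_le_sqrt (by push_cast [Fintype.card_fin]; linarith)))
end

section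
/- Let ℓ ≥ 1 be an integer and let M be the (ℓ+1) × (ℓ+1) real symmetric matrix with entries M_{ij} = 1 if |i − j| = 1 and M_{ij} = 0 otherwise. Let σ₀ > 0 and s ∈ ℝ with 2|s| < σ₀. Then the matrix σ₀·I + s·M is invertible and (1/2) · ‖ (σ₀·I + s·M)^{−1} · (s·M) ‖_F² ≤ s² · ℓ / (σ₀ − 2|s|)², where ‖·‖_F denotes the Frobenius (Hilbert–Schmidt) norm. -/
/-!
If `‖A X‖ ≤ c ‖X‖` for the Frobenius norm and every `X`, the triangle inequality applied to
`(σ₀ I + s A) X = σ₀ X + s (A X)` shows that left multiplication by `σ₀ I + s A` expands the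
Frobenius norm by at least `‖σ₀‖ - c ‖s‖`. When this number is positive, the matrix is invertible
and multiplying by its inverse contracts the norm correspondingly.

The `0`-`1` tridiagonal matrix is the adjacency matrix `A` of a path. In a graph with degrees at
most `d` the absolute row and column sums of `A` are at most `d`, so `c = d` is admissible by the
Schur test, and `‖A‖ ^ 2` is twice the number of edges.
-/

open Matrix SimpleGraph Finset
open scoped Matrix.Norms.Frobenius

section Frobenius

variable {l m n α : Type*} [Fintype m]

lemma sq_norm_mul_apply_le [NonUnitalSeminormedRing α] (A : Matrix l m α) (X : Matrix m n α)
    (i : l) (k : n) :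
    ‖(A * X) i k‖ ^ 2 ≤ (∑ j, ‖A i j‖) * ∑ j, ‖A i j‖ * ‖X j k‖ ^ 2 :=
  calc ‖(A * X) i k‖ ^ 2 ≤ (∑ j, ‖A i j‖ * ‖X j k‖) ^ 2 := by
        gcongr
        exact norm_sum_le_of_le _ fun j _ => norm_mul_le _ _
    _ ≤ (∑ j, ‖A i j‖) * ∑ j, ‖A i j‖ * ‖X j k‖ ^ 2 :=
        sum_sq_le_sum_mul_sum_of_sq_le_mul _ (fun _ _ => by positivity) (fun _ _ => by positivity)
          fun _ _ => by rw [mul_pow, sq ‖A i _‖, mul_assoc]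

variable [Fintype l] [Fintype n]

lemma frobenius_norm_sq [SeminormedAddCommGroup α] (A : Matrix m n α) :
    ‖A‖ ^ 2 = ∑ i, ∑ j, ‖A i j‖ ^ 2 := by
  have hnonneg : 0 ≤ ∑ i, ∑ j, ‖A i j‖ ^ 2 := by positivity
  simp only [frobenius_norm_def, Real.rpow_two, ← Real.sqrt_eq_rpow, Real.sq_sqrt hnonneg]

lemma frobenius_norm_mul_sq_le_of_sum_norm_le [NonUnitalSeminormedRing α] {A : Matrix l m α}
    {r c : ℝ} (hr : 0 ≤ r) (hrow : ∀ i, ∑ j, ‖A i j‖ ≤ r) (hcol : ∀ j, ∑ i, ‖A i j‖ ≤ c)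
    (X : Matrix m n α) : ‖A * X‖ ^ 2 ≤ r * c * ‖X‖ ^ 2 := by
  rw [frobenius_norm_sq, frobenius_norm_sq]
  calc ∑ i, ∑ k, ‖(A * X) i k‖ ^ 2
    _ ≤ ∑ i, ∑ k, r * ∑ j, ‖A i j‖ * ‖X j k‖ ^ 2 := by
        gcongr with i _ k _
        exact (sq_norm_mul_apply_le A X i k).trans (by gcongr; exact hrow i)
    _ = r * ∑ i, ∑ j, ‖A i j‖ * ∑ k, ‖X j k‖ ^ 2 := by
        simp only [← mul_sum, sum_comm (s := univ (α := n))]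
    _ = r * ∑ j, (∑ i, ‖A i j‖) * ∑ k, ‖X j k‖ ^ 2 := by
        rw [sum_comm]
        simp only [sum_mul]
    _ ≤ r * ∑ j, c * ∑ k, ‖X j k‖ ^ 2 := by
        gcongr with j
        exact hcol j
    _ = r * c * ∑ j, ∑ k, ‖X j k‖ ^ 2 := by rw [← mul_sum, mul_assoc]

end Frobenius

section Inverse

variable {m n 𝕜 : Type*} [Fintype m] [Fintype n] [DecidableEq n] [NormedField 𝕜]

lemma sub_mul_frobenius_norm_le (σ₀ s : 𝕜) {A : Matrix n n 𝕜} {X : Matrix n m 𝕜} {c : ℝ}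
    (hAX : ‖A * X‖ ≤ c * ‖X‖) :
    (‖σ₀‖ - c * ‖s‖) * ‖X‖ ≤ ‖(σ₀ • (1 : Matrix n n 𝕜) + s • A) * X‖ :=
  calc (‖σ₀‖ - c * ‖s‖) * ‖X‖ = ‖σ₀‖ * ‖X‖ - ‖s‖ * (c * ‖X‖) := by ring
    _ ≤ ‖σ₀ • X‖ - ‖s • (A * X)‖ := by
        rw [norm_smul, norm_smul]
        gcongr
    _ ≤ ‖σ₀ • X + s • (A * X)‖ := norm_sub_le_norm_add _ _
    _ = ‖(σ₀ • (1 : Matrix n n 𝕜) + s • A) * X‖ := by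
        rw [Matrix.add_mul, Matrix.smul_mul, Matrix.smul_mul, Matrix.one_mul]

variable {T : Matrix n n 𝕜} {δ : ℝ}

lemma isUnit_of_mul_frobenius_norm_le (hδ : 0 < δ)
    (hT : ∀ X : Matrix n n 𝕜, δ * ‖X‖ ≤ ‖T * X‖) : IsUnit T := by
  have hinj : Function.Injective (LinearMap.mulLeft 𝕜 T) :=
    (injective_iff_map_eq_zero _).2 fun X hX => norm_le_zero_iff.1 <| by
      have hTX := hT X
      rw [← LinearMap.mulLeft_apply (R := 𝕜) T X, hX, norm_zero] at hTX
      exact nonpos_of_mul_nonpos_right hTX hδ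
  obtain ⟨B, hB⟩ := LinearMap.injective_iff_surjective.1 hinj 1
  exact .of_mul_eq_one B hB

lemma mul_frobenius_norm_inv_mul_le (hδ : 0 < δ)
    (hT : ∀ X : Matrix n n 𝕜, δ * ‖X‖ ≤ ‖T * X‖) (B : Matrix n n 𝕜) :
    δ * ‖T⁻¹ * B‖ ≤ ‖B‖ := by
  have hdet : IsUnit T.det := (isUnit_iff_isUnit_det T).1 (isUnit_of_mul_frobenius_norm_le hδ hT)
  simpa only [mul_nonsing_inv_cancel_left T B hdet] using hT (T⁻¹ * B)

end Inverse

section AdjMatrix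

variable {V W α : Type*} [Fintype V] [Fintype W] (G : SimpleGraph V) [DecidableRel G.Adj]
  [SeminormedRing α] [NormOneClass α]

lemma sum_norm_adjMatrix_apply (v : V) : ∑ w, ‖G.adjMatrix α v w‖ = G.degree v := by
  simp [apply_ite norm, ← card_neighborFinset_eq_degree, neighborFinset_eq_filter]

lemma frobenius_norm_adjMatrix_sq : ‖G.adjMatrix α‖ ^ 2 = 2 * #G.edgeFinset := by
  have hsq (v w : V) : ‖G.adjMatrix α v w‖ ^ 2 = ‖G.adjMatrix α v w‖ := by
    rw [adjMatrix_apply]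
    split_ifs <;> simp
  simp only [frobenius_norm_sq, hsq, sum_norm_adjMatrix_apply]
  exact_mod_cast G.sum_degrees_eq_twice_card_edges

lemma frobenius_norm_adjMatrix_mul_le {d : ℕ} (hd : ∀ v, G.degree v ≤ d) (X : Matrix V W α) :
    ‖G.adjMatrix α * X‖ ≤ d * ‖X‖ := by
  have hrow (v : V) : ∑ w, ‖G.adjMatrix α v w‖ ≤ d := by
    rw [sum_norm_adjMatrix_apply]
    exact_mod_cast hd v
  have hcol (w : V) : ∑ v, ‖G.adjMatrix α v w‖ ≤ d := by
    simpa only [G.isSymm_adjMatrix.apply w] using hrow w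
  refine le_of_sq_le_sq ?_ (by positivity)
  rw [mul_pow, sq (d : ℝ)]
  exact frobenius_norm_mul_sq_le_of_sum_norm_le d.cast_nonneg hrow hcol X

end AdjMatrix

section PathGraph

lemma pathGraph_adj_iff_abs_sub_eq_one {n : ℕ} (i j : Fin n) :
    (pathGraph n).Adj i j ↔ |(i : ℤ) - (j : ℤ)| = 1 := by
  rw [pathGraph_adj, abs_eq zero_le_one]
  lia

lemma degree_pathGraph_le_two {n : ℕ} [DecidableRel (pathGraph n).Adj] (i : Fin n) :
    (pathGraph n).degree i ≤ 2 := by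
  have hsub :
      ((pathGraph n).neighborFinset i).map Fin.valEmbedding ⊆ {(i : ℕ) - 1, (i : ℕ) + 1} := by
    intro k hk
    simp only [mem_map, mem_neighborFinset, pathGraph_adj, Fin.valEmbedding_apply] at hk
    grind
  rw [← card_neighborFinset_eq_degree, ← card_map Fin.valEmbedding]
  exact (card_le_card hsub).trans card_le_two

lemma card_edgeFinset_pathGraph (n : ℕ) [Fintype (pathGraph (n + 1)).edgeSet] :
    #(pathGraph (n + 1)).edgeFinset = n := by
  have hinj : Function.Injective fun k : Fin n => s(k.castSucc, k.succ) := by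
    intro a b hab
    simp only [Sym2.eq_iff, Fin.ext_iff, Fin.val_castSucc, Fin.val_succ] at hab
    lia
  have himage : (pathGraph (n + 1)).edgeFinset =
      univ.image fun k : Fin n => s(k.castSucc, k.succ) := by
    ext e
    induction e with | _ i j
    simp only [mem_edgeFinset, mem_edgeSet, pathGraph_adj, mem_image, mem_univ, true_and,
      Sym2.eq_iff, Fin.ext_iff, Fin.val_castSucc, Fin.val_succ]
    refine ⟨?_, by rintro ⟨k, hk⟩; lia⟩
    rintro (hij | hji)
    · exact ⟨⟨i, by lia⟩, .inl ⟨rfl, hij⟩⟩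
    · exact ⟨⟨j, by lia⟩, .inr ⟨rfl, hji⟩⟩
  rw [himage, card_image_of_injective _ hinj, card_univ, Fintype.card_fin]

end PathGraph

theorem fisher_info_matrix_bound_general {V 𝕜 : Type*} [Fintype V] [DecidableEq V] [NormedField 𝕜]
    (G : SimpleGraph V) [DecidableRel G.Adj] {d : ℕ} (hd : ∀ v, G.degree v ≤ d) {σ₀ s : 𝕜}
    (hs : d * ‖s‖ < ‖σ₀‖) :
    IsUnit (σ₀ • (1 : Matrix V V 𝕜) + s • G.adjMatrix 𝕜) ∧
    (1 / 2) * (∑ i, ∑ j,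
      ‖((σ₀ • (1 : Matrix V V 𝕜) + s • G.adjMatrix 𝕜)⁻¹ * (s • G.adjMatrix 𝕜)) i j‖ ^ 2) ≤
      ‖s‖ ^ 2 * #G.edgeFinset / (‖σ₀‖ - d * ‖s‖) ^ 2 := by
  have hδ : 0 < ‖σ₀‖ - d * ‖s‖ := sub_pos.2 hs
  have hexpand (X : Matrix V V 𝕜) :=
    sub_mul_frobenius_norm_le σ₀ s (frobenius_norm_adjMatrix_mul_le G hd X)
  refine ⟨isUnit_of_mul_frobenius_norm_le hδ hexpand, ?_⟩
  have hinv := pow_le_pow_left₀ (by positivity)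
    (mul_frobenius_norm_inv_mul_le hδ hexpand (s • G.adjMatrix 𝕜)) 2
  rw [norm_smul, mul_pow, mul_pow, frobenius_norm_adjMatrix_sq] at hinv
  rw [← frobenius_norm_sq, le_div_iff₀ (by positivity)]
  linarith

/-- Fisher-information matrix computation from the lower-bound proof: for the
tridiagonal 0-1 matrix `M` of size `(ℓ+1) × (ℓ+1)` and `2|s| < σ₀`, the matrix
`σ₀ I + s M` is invertible and
`(1/2) ‖(σ₀ I + s M)⁻¹ (s M)‖_F² ≤ s² ℓ / (σ₀ − 2|s|)²`,
where `‖A‖_F² = Σ_{i,j} A_{ij}²` is the squared Frobenius norm. -/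
theorem fisher_info_matrix_bound
    (ℓ : ℕ) (hℓ : 1 ≤ ℓ) (σ₀ s : ℝ) (hσ₀ : 0 < σ₀) (hs : 2 * |s| < σ₀)
    (M : Matrix (Fin (ℓ + 1)) (Fin (ℓ + 1)) ℝ)
    (hM : ∀ i j : Fin (ℓ + 1), M i j = if |(i : ℤ) - (j : ℤ)| = 1 then 1 else 0) :
    IsUnit (σ₀ • (1 : Matrix (Fin (ℓ + 1)) (Fin (ℓ + 1)) ℝ) + s • M) ∧
    (1 / 2) *
        (∑ i, ∑ j,
          (((σ₀ • (1 : Matrix (Fin (ℓ + 1)) (Fin (ℓ + 1)) ℝ) + s • M)⁻¹ * (s • M)) i j) ^ 2) ≤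
      s ^ 2 * ℓ / (σ₀ - 2 * |s|) ^ 2 := by
  classical
  obtain rfl : M = (pathGraph (ℓ + 1)).adjMatrix ℝ := by
    ext i j
    simp only [hM, adjMatrix_apply, pathGraph_adj_iff_abs_sub_eq_one]
  simpa only [Real.norm_eq_abs, sq_abs, abs_of_pos hσ₀, card_edgeFinset_pathGraph, Nat.cast_ofNat]
    using fisher_info_matrix_bound_general (pathGraph (ℓ + 1)) degree_pathGraph_le_two
      (σ₀ := σ₀) (s := s) (by simpa [abs_of_pos hσ₀] using hs)
end
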